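/- For every closed term M of Λ⊕, ⟦M⟧div + Σ⟦M⟧v = 1, where ⟦M⟧div = sup{p | M ⇓div p}: the divergence probability and the total convergence probability of M sum to exactly 1. -/

import Mathlib

open scoped ENNReal

/-- Terms of Λ⊕ (and of Λ⊕⁺), in de Bruijn notation: variables, abstractions,
applications and binary (probabilistic) sums.  De Bruijn indices realize
"terms up to renaming of bound variables". -/
inductive Term : Type
  | var : ℕ → Term
  | lam : Term → Term
  | app : Term → Term → Term
  | choice : Term → Term → Term
  deriving DecidableEq

namespace Term

/-- Values: variables and abstractions. -/
inductive IsValue : Term → Prop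
  | var (n : ℕ) : IsValue (var n)
  | lam (M : Term) : IsValue (lam M)

/-- Boolean value test. -/
def isVal : Term → Bool
  | var _ => true
  | lam _ => true
  | _ => false

/-- Shifting of de Bruijn indices: add `d` to all indices `≥ c`. -/
def shift (d c : ℕ) : Term → Term
  | var n => if n < c then var n else var (n + d)
  | lam M => lam (shift d (c + 1) M)
  | app M N => app (shift d c M) (shift d c N)
  | choice M N => choice (shift d c M) (shift d c N)

/-- Capture-avoiding substitution `M[j := N]` (the variable `j` is consumed and
higher indices are decremented, as in a β-step). -/
def subst : Term → ℕ → Term → Term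
  | var n, j, N => if n = j then shift j 0 N else if j < n then var (n - 1) else var n
  | lam M, j, N => lam (subst M (j + 1) N)
  | app M L, j, N => app (subst M j N) (subst L j N)
  | choice M L, j, N => choice (subst M j N) (subst L j N)

/-- All free indices are `< n`. -/
def closedUnder : Term → ℕ → Prop
  | var m, n => m < n
  | lam M, n => closedUnder M (n + 1)
  | app M N, n => closedUnder M n ∧ closedUnder N n
  | choice M N, n => closedUnder M n ∧ closedUnder N n

/-- Closed terms: no free variables. -/
def Closed (M : Term) : Prop := closedUnder M 0

end Term

/-- (Sub)distributions are represented as functions from terms into `ℝ≥0∞`;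
genuine distributions (`IsDist`) are supported on values and have mass `≤ 1`. -/
abbrev PDist := Term → ℝ≥0∞

/-- The sum (total mass) `Σ𝒟` of a distribution. -/
noncomputable def dsum (D : PDist) : ℝ≥0∞ := ∑' M, D M

/-- The support of a distribution. -/
def dsupp (D : PDist) : Set Term := {M | D M ≠ 0}

/-- The everywhere-zero distribution `∅`. -/
noncomputable def dzero : PDist := fun _ => 0

/-- The Dirac distribution `{V^1}`. -/
noncomputable def dirac (V : Term) : PDist := fun M => if M = V then 1 else 0

/-- Being a genuine (sub)probability distribution: supported on values, with
total mass at most one. -/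
def IsDist (D : PDist) : Prop := (∀ M, D M ≠ 0 → M.IsValue) ∧ dsum D ≤ 1

/-- Call-by-value reduction `↦v`, relating a term to the (equiprobable) finite
sequence of its possible reducts. -/
inductive RedV : Term → List Term → Prop
  | beta {M V : Term} : V.IsValue → RedV (.app (.lam M) V) [M.subst 0 V]
  | choice {V W : Term} : V.IsValue → W.IsValue → RedV (.choice V W) [V, W]
  | appL {M N : Term} {Ls : List Term} :
      RedV M Ls → RedV (.app M N) (Ls.map (fun L => .app L N))
  | appR {V M : Term} {Ns : List Term} :
      V.IsValue → RedV M Ns → RedV (.app V M) (Ns.map (fun L => .app V L))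
  | choiceL {M N : Term} {Ls : List Term} :
      RedV M Ls → RedV (.choice M N) (Ls.map (fun L => .choice L N))
  | choiceR {V M : Term} {Ns : List Term} :
      V.IsValue → RedV M Ns → RedV (.choice V M) (Ns.map (fun L => .choice V L))

/-- Call-by-name reduction `↦n`. -/
inductive RedN : Term → List Term → Prop
  | beta {M N : Term} : RedN (.app (.lam M) N) [M.subst 0 N]
  | choice {M N : Term} : RedN (.choice M N) [M, N]
  | appL {M N : Term} {Ls : List Term} :
      RedN M Ls → RedN (.app M N) (Ls.map (fun L => .app L N))

/-- The inductive small-step convergence relation `⇒`, parametric in the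
underlying reduction relation: any term evaluates to `∅`; a value `V`
evaluates to `{V^1}`; and if `M ↦ N₁,…,Nₙ` and `Nᵢ ⇒ 𝒟ᵢ` then
`M ⇒ Σᵢ (1/n)𝒟ᵢ`. -/
inductive Conv (Red : Term → List Term → Prop) : Term → PDist → Prop
  | bot (M : Term) : Conv Red M dzero
  | val {V : Term} : V.IsValue → Conv Red V (dirac V)
  | step {M : Term} {Ns : List Term} (Ds : Fin Ns.length → PDist) :
      Red M Ns → (∀ i, Conv Red (Ns.get i) (Ds i)) →
      Conv Red M (fun W => (∑ i, Ds i W) / (Ns.length : ℝ≥0∞))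

/-- Call-by-value small-step convergence `⇒v`. -/
def SmallV : Term → PDist → Prop := Conv RedV

/-- Call-by-name small-step convergence `⇒n`. -/
def SmallN : Term → PDist → Prop := Conv RedN

/-- The small-step semantics `⟦M⟧`: the pointwise supremum of all distributions
derivable for `M`. -/
noncomputable def semOf (S : Term → PDist → Prop) (M : Term) : PDist :=
  fun W => ⨆ (D : PDist) (_ : S M D), D W

/-- Call-by-value small-step semantics `⟦M⟧v`. -/
noncomputable def semV : Term → PDist := semOf SmallV

/-- Call-by-name small-step semantics `⟦M⟧n`. -/
noncomputable def semN : Term → PDist := semOf SmallN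

/-- One-step unfolding of the divergence inference system: a value diverges
with probability `0`; if `M ↦ N₁,…,Nₙ` and `Nᵢ` diverges with probability
`pᵢ`, then `M` diverges with probability `Σᵢ (1/n)pᵢ`. -/
def DivStep (Red : Term → List Term → Prop) (R : Term → ℝ≥0∞ → Prop)
    (M : Term) (p : ℝ≥0∞) : Prop :=
  (M.IsValue ∧ p = 0) ∨
    ∃ (Ns : List Term) (ps : Fin Ns.length → ℝ≥0∞),
      Red M Ns ∧ (∀ i, R (Ns.get i) (ps i)) ∧ p = (∑ i, ps i) / (Ns.length : ℝ≥0∞)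

/-- The coinductively-defined divergence relation `⇓div`: the union of all
consistent relations between terms and probabilities in `[0,1]`. -/
def Diverges (Red : Term → List Term → Prop) (M : Term) (p : ℝ≥0∞) : Prop :=
  ∃ R : Term → ℝ≥0∞ → Prop,
    (∀ N q, R N q → q ≤ 1 ∧ DivStep Red R N q) ∧ R M p

/-- Call-by-value divergence `⇓div`. -/
def DivV : Term → ℝ≥0∞ → Prop := Diverges RedV

/-- Call-by-name divergence `⇓div,n`. -/
def DivN : Term → ℝ≥0∞ → Prop := Diverges RedN

/-- One-step unfolding of the call-by-value big-step inference system. -/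
def BigVStep (R : Term → PDist → Prop) (M : Term) (D : PDist) : Prop :=
  (M.IsValue ∧ D = dirac M) ∨
  (∃ (N L : Term) (E F : PDist) (G : Term → Term → PDist),
      M = .app N L ∧ R N E ∧ R L F ∧
      (∀ P V, E (.lam P) ≠ 0 → V.IsValue → F V ≠ 0 → R (P.subst 0 V) (G P V)) ∧
      D = fun W => ∑' (P : Term), ∑' (V : Term), E (.lam P) * F V * G P V W) ∨
  (∃ (N L : Term) (E F : PDist),
      M = .choice N L ∧ R N E ∧ R L F ∧
      D = fun W => (E W * dsum F + F W * dsum E) / 2)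

/-- The coinductive call-by-value big-step relation `⇓v`: the union of all
consistent relations between terms and distributions. -/
def BigV (M : Term) (D : PDist) : Prop :=
  ∃ R : Term → PDist → Prop,
    (∀ N E, R N E → IsDist E ∧ BigVStep R N E) ∧ R M D

/-- One-step unfolding of the call-by-name big-step inference system. -/
def BigNStep (R : Term → PDist → Prop) (M : Term) (D : PDist) : Prop :=
  (M.IsValue ∧ D = dirac M) ∨
  (∃ (N L : Term) (E : PDist) (F : Term → PDist),
      M = .app N L ∧ R N E ∧
      (∀ P, E (.lam P) ≠ 0 → R (P.subst 0 L) (F P)) ∧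
      D = fun W => ∑' (P : Term), E (.lam P) * F P W) ∨
  (∃ (N L : Term) (E F : PDist),
      M = .choice N L ∧ R N E ∧ R L F ∧ D = fun W => (E W + F W) / 2)

/-- The coinductive call-by-name big-step relation `⇓n`. -/
def BigN (M : Term) (D : PDist) : Prop :=
  ∃ R : Term → PDist → Prop,
    (∀ N E, R N E → IsDist E ∧ BigNStep R N E) ∧ R M D

/-- Big-step semantics `⟪M⟫`: the pointwise infimum of all distributions
derivable for `M` in a big-step system. -/
noncomputable def bigSemOf (B : Term → PDist → Prop) (M : Term) : PDist :=
  fun W => ⨅ (D : PDist) (_ : B M D), D W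

namespace Term

theorem closedUnder_mono {M : Term} : ∀ {n m : ℕ}, n ≤ m → M.closedUnder n → M.closedUnder m := by
  induction M with
  | var k => intro n m h hk; exact lt_of_lt_of_le hk h
  | lam M ih => intro n m h hk; exact ih (Nat.succ_le_succ h) hk
  | app M N ihM ihN => intro n m h hk; exact ⟨ihM h hk.1, ihN h hk.2⟩
  | choice M N ihM ihN => intro n m h hk; exact ⟨ihM h hk.1, ihN h hk.2⟩

theorem shift_of_closedUnder {M : Term} (d : ℕ) : ∀ {c : ℕ}, M.closedUnder c → M.shift d c = M := by
  induction M with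
  | var k => intro c h; simp only [closedUnder] at h; simp [shift, h]
  | lam M ih => intro c h; simp only [shift]; rw [ih h]
  | app M N ihM ihN => intro c h; simp only [shift]; rw [ihM h.1, ihN h.2]
  | choice M N ihM ihN => intro c h; simp only [shift]; rw [ihM h.1, ihN h.2]

theorem closedUnder_subst {M N : Term} (hN : N.Closed) :
    ∀ {j : ℕ}, M.closedUnder (j + 1) → (M.subst j N).closedUnder j := by
  induction M with
  | var k =>
    intro j h
    simp only [closedUnder] at h
    simp only [subst]
    split_ifs with h1 h2
    · rw [shift_of_closedUnder j hN]
      exact closedUnder_mono (Nat.zero_le _) hN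
    · omega
    · simp only [closedUnder]; omega
  | lam M ih => intro j h; exact ih h
  | app M L ihM ihL => intro j h; exact ⟨ihM h.1, ihL h.2⟩
  | choice M L ihM ihL => intro j h; exact ⟨ihM h.1, ihL h.2⟩

end Term

open Term in
theorem RedV.closed {M : Term} {Ns : List Term} (h : RedV M Ns) :
    M.Closed → ∀ N ∈ Ns, N.Closed := by
  induction h with
  | beta hV =>
    intro hc N hN
    simp only [List.mem_singleton] at hN
    subst hN
    exact closedUnder_subst hc.2 hc.1
  | choice hV hW =>
    intro hc N hN
    simp only [List.mem_cons, List.not_mem_nil, or_false] at hN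
    rcases hN with rfl | rfl
    · exact hc.1
    · exact hc.2
  | appL _ ih | choiceL _ ih =>
    intro hc N hN
    obtain ⟨L, hL, rfl⟩ := List.mem_map.1 hN
    exact ⟨ih hc.1 L hL, hc.2⟩
  | appR _ _ ih | choiceR _ _ ih =>
    intro hc N hN
    obtain ⟨L, hL, rfl⟩ := List.mem_map.1 hN
    exact ⟨hc.1, ih hc.2 L hL⟩

theorem RedV.not_value {M : Term} {Ns : List Term} (h : RedV M Ns) : ¬ M.IsValue := by
  intro hv
  cases h <;> cases hv

theorem RedV.pos {M : Term} {Ns : List Term} (h : RedV M Ns) : Ns.length ≠ 0 := by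
  induction h <;> simp_all

theorem RedV.det {M : Term} {Ns Ns' : List Term} (h : RedV M Ns) (h' : RedV M Ns') :
    Ns = Ns' := by
  induction h generalizing Ns' with
  | beta hV =>
    cases h' with
    | beta _ => rfl
    | appL h => exact absurd (.lam _) h.not_value
    | appR _ h => exact absurd hV h.not_value
  | choice hV hW =>
    cases h' with
    | choice _ _ => rfl
    | choiceL h => exact absurd hV h.not_value
    | choiceR _ h => exact absurd hW h.not_value
  | appL h ih =>
    cases h' with
    | beta _ => exact absurd (.lam _) h.not_value
    | appL h2 => rw [ih h2]
    | appR hV _ => exact absurd hV h.not_value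
  | appR hV h ih =>
    cases h' with
    | beta hW => exact absurd hW h.not_value
    | appL h2 => exact absurd hV h2.not_value
    | appR _ h2 => rw [ih h2]
  | choiceL h ih =>
    cases h' with
    | choice hV _ => exact absurd hV h.not_value
    | choiceL h2 => rw [ih h2]
    | choiceR hV _ => exact absurd hV h.not_value
  | choiceR hV h ih =>
    cases h' with
    | choice _ hW => exact absurd hW h.not_value
    | choiceL h2 => exact absurd hV h2.not_value
    | choiceR _ h2 => rw [ih h2]

theorem RedV.progress {M : Term} : M.Closed → M.IsValue ∨ ∃ Ns, RedV M Ns := by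
  induction M with
  | var k => intro _; exact .inl (.var k)
  | lam M _ => intro _; exact .inl (.lam M)
  | app M N ihM ihN =>
    intro hc
    right
    rcases ihM hc.1 with hM | ⟨Ls, hL⟩
    · rcases ihN hc.2 with hN | ⟨Ls, hL⟩
      · cases hM with
        | var n => exact absurd hc.1 (Nat.not_lt_zero n)
        | lam P => exact ⟨_, .beta hN⟩
      · exact ⟨_, .appR hM hL⟩
    · exact ⟨_, .appL hL⟩
  | choice M N ihM ihN =>
    intro hc
    right
    rcases ihM hc.1 with hM | ⟨Ls, hL⟩
    · rcases ihN hc.2 with hN | ⟨Ls, hL⟩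
      · exact ⟨_, .choice hM hN⟩
      · exact ⟨_, .choiceR hM hL⟩
    · exact ⟨_, .choiceL hL⟩

open Classical in
/-- The canonical `n`-step approximation of the small-step semantics. -/
noncomputable def approxV : ℕ → Term → PDist
  | 0, _ => dzero
  | n + 1, M =>
    if M.IsValue then dirac M
    else if h : ∃ Ns, RedV M Ns then
      fun W => (∑ i : Fin h.choose.length, approxV n (h.choose.get i) W) /
        (h.choose.length : ℝ≥0∞)
    else dzero

theorem approxV_val {M : Term} (n : ℕ) (h : M.IsValue) : approxV (n + 1) M = dirac M := by
  simp [approxV, h]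

theorem approxV_red {M : Term} {Ns : List Term} (n : ℕ) (h : RedV M Ns) :
    approxV (n + 1) M =
      fun W => (∑ i : Fin Ns.length, approxV n (Ns.get i) W) / (Ns.length : ℝ≥0∞) := by
  have hex : ∃ Ns, RedV M Ns := ⟨Ns, h⟩
  have he : hex.choose = Ns := hex.choose_spec.det h
  have h1 : approxV (n + 1) M = fun W =>
      (∑ i : Fin hex.choose.length, approxV n (hex.choose.get i) W) /
        (hex.choose.length : ℝ≥0∞) := by
    rw [approxV, if_neg h.not_value, dif_pos hex]
  rw [h1]
  generalize hex.choose = Ns' at he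
  subst he
  rfl

theorem approxV_stuck {M : Term} (n : ℕ) (h : ¬ M.IsValue) (h' : ¬ ∃ Ns, RedV M Ns) :
    approxV n M = dzero := by
  cases n <;> simp [approxV, h, h']

theorem approxV_small (n : ℕ) : ∀ M, SmallV M (approxV n M) := by
  induction n with
  | zero => intro M; exact .bot M
  | succ n ih =>
    intro M
    by_cases hv : M.IsValue
    · rw [approxV_val n hv]; exact .val hv
    · by_cases hr : ∃ Ns, RedV M Ns
      · obtain ⟨Ns, hN⟩ := hr
        rw [approxV_red n hN]
        exact .step _ hN (fun i => ih _)
      · rw [approxV_stuck _ hv hr]; exact .bot M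

theorem approxV_le_succ (n : ℕ) : ∀ M, approxV n M ≤ approxV (n + 1) M := by
  induction n with
  | zero => intro M W; exact zero_le
  | succ n ih =>
    intro M
    by_cases hv : M.IsValue
    · rw [approxV_val n hv, approxV_val _ hv]
    · by_cases hr : ∃ Ns, RedV M Ns
      · obtain ⟨Ns, hN⟩ := hr
        rw [approxV_red n hN, approxV_red _ hN]
        intro W
        exact ENNReal.div_le_div_right (Finset.sum_le_sum fun i _ => ih _ W) _
      · rw [approxV_stuck _ hv hr]; intro W; exact zero_le

theorem approxV_mono (M : Term) : Monotone (fun n => approxV n M) :=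
  monotone_nat_of_le_succ fun n => approxV_le_succ n M

theorem small_le_approxV {M : Term} {D : PDist} (h : SmallV M D) : ∃ n, D ≤ approxV n M := by
  unfold SmallV at h
  induction h with
  | bot M => exact ⟨0, fun _ => zero_le⟩
  | val hv => exact ⟨1, by rw [approxV_val 0 hv]⟩
  | @step M Ns Ds hr _ ih =>
    choose f hf using ih
    refine ⟨Finset.univ.sup f + 1, ?_⟩
    rw [approxV_red _ hr]
    intro W
    refine ENNReal.div_le_div_right (Finset.sum_le_sum fun i _ => ?_) _
    exact (hf i W).trans (approxV_mono _ (Finset.le_sup (Finset.mem_univ i)) W)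

theorem semV_eq (M W : Term) : semV M W = ⨆ n, approxV n M W := by
  apply le_antisymm
  · refine iSup₂_le fun D hD => ?_
    obtain ⟨n, hn⟩ := small_le_approxV hD
    exact (hn W).trans (le_iSup (fun n => approxV n M W) n)
  · refine iSup_le fun n => ?_
    exact le_iSup₂ (f := fun (D : PDist) (_ : SmallV M D) => D W) _ (approxV_small n M)

/-- Mass of the `n`-step approximation. -/
noncomputable def massV (n : ℕ) (M : Term) : ℝ≥0∞ := dsum (approxV n M)

theorem massV_mono (M : Term) : Monotone (fun n => massV n M) := fun _ _ h =>
  ENNReal.tsum_le_tsum fun W => approxV_mono M h W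

theorem dsum_semV (M : Term) : dsum (semV M) = ⨆ n, massV n M := by
  unfold massV dsum
  simp only [semV_eq]
  simp only [ENNReal.tsum_eq_iSup_sum]
  rw [iSup_comm]
  congr 1
  ext s
  exact ENNReal.finsetSum_iSup_of_monotone fun W _ _ h => approxV_mono M h W

theorem massV_zero (M : Term) : massV 0 M = 0 := by
  simp [massV, dsum, approxV, dzero]

theorem massV_val {M : Term} (n : ℕ) (h : M.IsValue) : massV (n + 1) M = 1 := by
  simp [massV, dsum, approxV_val n h, dirac]

theorem massV_red {M : Term} {Ns : List Term} (n : ℕ) (h : RedV M Ns) :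
    massV (n + 1) M = (∑ i : Fin Ns.length, massV n (Ns.get i)) / (Ns.length : ℝ≥0∞) := by
  simp only [massV, dsum, approxV_red n h, div_eq_mul_inv]
  rw [ENNReal.tsum_mul_right, Summable.tsum_finsetSum fun _ _ => ENNReal.summable]

theorem div_mass_le {R : Term → ℝ≥0∞ → Prop}
    (hR : ∀ N q, R N q → q ≤ 1 ∧ DivStep RedV R N q) (n : ℕ) :
    ∀ M p, R M p → p + massV n M ≤ 1 := by
  induction n with
  | zero => intro M p h; rw [massV_zero, add_zero]; exact (hR M p h).1
  | succ n ih =>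
    intro M p h
    rcases (hR M p h).2 with ⟨hv, rfl⟩ | ⟨Ns, ps, hr, hps, rfl⟩
    · rw [massV_val n hv, zero_add]
    · rw [massV_red n hr, ← ENNReal.add_div, ← Finset.sum_add_distrib]
      refine ENNReal.div_le_of_le_mul ?_
      rw [one_mul]
      calc _ ≤ ∑ i : Fin Ns.length, (1 : ℝ≥0∞) := Finset.sum_le_sum fun i _ => ih _ _ (hps i)
        _ = _ := by simp

theorem mass_le_one (n : ℕ) : ∀ M, massV n M ≤ 1 := by
  induction n with
  | zero => intro M; rw [massV_zero]; exact zero_le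
  | succ n ih =>
    intro M
    by_cases hv : M.IsValue
    · rw [massV_val n hv]
    · by_cases hr : ∃ Ns, RedV M Ns
      · obtain ⟨Ns, hr⟩ := hr
        rw [massV_red n hr]
        refine ENNReal.div_le_of_le_mul ?_
        rw [one_mul]
        calc _ ≤ ∑ i : Fin Ns.length, (1 : ℝ≥0∞) := Finset.sum_le_sum fun i _ => ih _
          _ = _ := by simp
      · simp [massV, approxV_stuck _ hv hr, dsum, dzero]

theorem dsum_semV_le_one (M : Term) : dsum (semV M) ≤ 1 := by
  rw [dsum_semV]; exact iSup_le fun n => mass_le_one n M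

theorem dsum_semV_val {M : Term} (h : M.IsValue) : dsum (semV M) = 1 := by
  refine le_antisymm (dsum_semV_le_one M) ?_
  rw [dsum_semV, ← massV_val 0 h]
  exact le_iSup (fun n => massV n M) 1

theorem dsum_semV_red {M : Term} {Ns : List Term} (h : RedV M Ns) :
    dsum (semV M) = (∑ i : Fin Ns.length, dsum (semV (Ns.get i))) / (Ns.length : ℝ≥0∞) := by
  simp only [dsum_semV]
  rw [ENNReal.finsetSum_iSup_of_monotone fun i => massV_mono _, ENNReal.iSup_div,
    ← (massV_mono M).iSup_nat_add 1]
  simp only [massV_red _ h]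

theorem divV_compl {M : Term} (hM : M.Closed) : DivV M (1 - dsum (semV M)) := by
  refine ⟨fun N q => N.Closed ∧ q = 1 - dsum (semV N), ?_, hM, rfl⟩
  rintro N q ⟨hN, rfl⟩
  refine ⟨tsub_le_self, ?_⟩
  rcases RedV.progress hN with hv | ⟨Ns, hr⟩
  · left; exact ⟨hv, by rw [dsum_semV_val hv, tsub_self]⟩
  · right
    refine ⟨Ns, fun i => 1 - dsum (semV (Ns.get i)), hr,
      fun i => ⟨hr.closed hN _ (List.get_mem _ _), rfl⟩, ?_⟩
    have hne : dsum (semV N) ≠ ∞ := ne_top_of_le_ne_top ENNReal.one_ne_top (dsum_semV_le_one N)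
    refine (ENNReal.eq_sub_of_add_eq hne ?_).symm
    rw [dsum_semV_red hr, ← ENNReal.add_div, ← Finset.sum_add_distrib]
    simp only [tsub_add_cancel_of_le (dsum_semV_le_one _)]
    have h0 : (Ns.length : ℝ≥0∞) ≠ 0 := Nat.cast_ne_zero.2 hr.pos
    simp [ENNReal.div_self h0 (ENNReal.natCast_ne_top _)]

/-- the divergence probability and the total convergence
probability of `M` sum to exactly `1`. -/
theorem divSemV_add_semV_mass (M : Term) (hM : M.Closed) :
    (⨆ (p : ℝ≥0∞) (_ : DivV M p), p) + dsum (semV M) = 1 := by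
  have h : (⨆ (p : ℝ≥0∞) (_ : DivV M p), p) = 1 - dsum (semV M) := by
    apply le_antisymm
    · refine iSup₂_le fun p hp => ?_
      obtain ⟨R, hR, hMp⟩ := hp
      have hne : dsum (semV M) ≠ ∞ :=
        ne_top_of_le_ne_top ENNReal.one_ne_top (dsum_semV_le_one M)
      refine ENNReal.le_sub_of_add_le_right hne ?_
      rw [dsum_semV, ENNReal.add_iSup]
      exact iSup_le fun n => div_mass_le hR n M p hMp
    · exact le_iSup₂ (f := fun (p : ℝ≥0∞) (_ : DivV M p) => p) _ (divV_compl hM)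
  rw [h, tsub_add_cancel_of_le (dsum_semV_le_one M)]
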